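/- Let (X,d) be a metric space, T a metrically nonspreading mapping of X into itself, and {x_n} a sequence in X such that the asymptotic center AC({x_n}) equals the singleton {p} for some p ∈ X. If limsup_n d(x_n, p) = limsup_n d(Tx_n, p) and limsup_n d(x_n, Tp) = limsup_n d(Tx_n, Tp), then Tp = p. -/

import Mathlib

/-!
Write `r(u) = limsupₙ d(xₙ, u)`. Applying the nonspreading inequality to the pair `(xₙ, p)` and
passing to the limsup gives `2 r(Tp)² ≤ r(p)² + r(Tp)²` under the two hypotheses on `T xₙ`, so
`r(Tp) ≤ r(p)`: the asymptotic center contains `Tp` together with `p`. If `{xₙ}` is unbounded, then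
`r` is identically the junk value `0` and the asymptotic center is the whole space.
-/

open Filter

section LimsupReal

variable {ι : Type*} {l : Filter ι}

lemma isBoundedUnder_le_pow {R : Type*} [Semiring R] [PartialOrder R] [IsOrderedRing R] {f : ι → R}
    (hf₀ : 0 ≤ᶠ[l] f) (hf : IsBoundedUnder (· ≤ ·) l f) (n : ℕ) :
    IsBoundedUnder (· ≤ ·) l fun i ↦ f i ^ n := by
  obtain ⟨M, hM⟩ := hf.eventually_le
  refine isBoundedUnder_of_eventually_le (a := M ^ n) ?_
  filter_upwards [hf₀, hM] with i hi₀ hiM using pow_le_pow_left₀ hi₀ hiM n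

variable [NeBot l] {f : ι → ℝ}

lemma limsup_const_mul_of_nonneg {c : ℝ} (hc : 0 ≤ c) (hf : IsBoundedUnder (· ≤ ·) l f)
    (hf' : IsCoboundedUnder (· ≤ ·) l f) :
    limsup (fun i ↦ c * f i) l = c * limsup f l :=
  ((monotone_mul_left_of_nonneg hc).map_limsup_of_continuousAt f
    (continuous_const_mul c).continuousAt hf hf').symm

lemma limsup_pow_of_nonneg (hf₀ : 0 ≤ᶠ[l] f) (hf : IsBoundedUnder (· ≤ ·) l f) (n : ℕ) :
    limsup (fun i ↦ f i ^ n) l = limsup f l ^ n := by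
  have limsup_nonneg : 0 ≤ limsup f l := le_limsup_of_frequently_le hf₀.frequently hf
  -- `t ↦ t ^ n` need not be monotone on `ℝ`, but it is after truncating `t` at `0`.
  have monotone_max_pow : Monotone fun t : ℝ ↦ max t 0 ^ n := fun s t hst ↦
    pow_le_pow_left₀ (le_max_right s 0) (max_le_max_right 0 hst) n
  have map_limsup := monotone_max_pow.map_limsup_of_continuousAt f
    (by fun_prop) hf (isBoundedUnder_of_eventually_ge hf₀).isCoboundedUnder_le
  rw [max_eq_left limsup_nonneg] at map_limsup
  rw [map_limsup]
  refine limsup_congr ?_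
  filter_upwards [hf₀] with i (hi : 0 ≤ f i)
  simp only [Function.comp_apply, max_eq_left hi]

end LimsupReal

section AsymptoticCenter

variable {ι X : Type*}

/-- The asymptotic radius `limsup d(xᵢ, u)` of the family `x` at the point `u`, along the filter
`l`. It takes the junk value `0` if `x` is unbounded along `l`. -/
noncomputable def asymptoticRadius [Dist X] (l : Filter ι) (x : ι → X) (u : X) : ℝ :=
  limsup (fun i ↦ dist (x i) u) l

/-- The asymptotic center of the family `x` along the filter `l`: the points at which the
asymptotic radius attains its infimum. -/
def asymptoticCenter [Dist X] (l : Filter ι) (x : ι → X) : Set X :=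
  {u | asymptoticRadius l x u = ⨅ y, asymptoticRadius l x y}

variable [PseudoMetricSpace X] {l : Filter ι} {x : ι → X} {u v : X}

lemma isBoundedUnder_le_dist_right_congr (u v : X) :
    IsBoundedUnder (· ≤ ·) l (fun i ↦ dist (x i) u) ↔
      IsBoundedUnder (· ≤ ·) l fun i ↦ dist (x i) v := by
  have change_point (u v : X) (hu : IsBoundedUnder (· ≤ ·) l fun i ↦ dist (x i) u) :
      IsBoundedUnder (· ≤ ·) l fun i ↦ dist (x i) v :=
    (isBoundedUnder_le_add hu (isBoundedUnder_const (a := dist u v))).mono_le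
      (.of_forall fun i ↦ dist_triangle (x i) u v)
  exact ⟨change_point u v, change_point v u⟩

lemma asymptoticRadius_eq_zero_of_not_isBoundedUnder
    (hu : ¬ IsBoundedUnder (· ≤ ·) l fun i ↦ dist (x i) u) : asymptoticRadius l x u = 0 := by
  have no_bound : {a | ∀ᶠ i in l, dist (x i) u ≤ a} = ∅ :=
    Set.eq_empty_of_forall_notMem fun _ ha ↦ hu (isBoundedUnder_of_eventually_le ha)
  rw [asymptoticRadius, limsup_eq, no_bound, Real.sInf_empty]

lemma asymptoticCenter_eq_univ_of_not_isBoundedUnder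
    (hu : ¬ IsBoundedUnder (· ≤ ·) l fun i ↦ dist (x i) u) : asymptoticCenter l x = .univ := by
  have radius_eq_zero (y : X) : asymptoticRadius l x y = 0 :=
    asymptoticRadius_eq_zero_of_not_isBoundedUnder fun hy ↦
      hu ((isBoundedUnder_le_dist_right_congr y u).1 hy)
  simp only [asymptoticCenter, radius_eq_zero, Real.iInf_const_zero, Set.ofPred_true]

variable [NeBot l]

lemma asymptoticRadius_nonneg : 0 ≤ asymptoticRadius l x u := by
  rw [asymptoticRadius, limsup_eq]
  refine Real.sInf_nonneg fun a ha ↦ ?_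
  obtain ⟨i, hi⟩ := ha.exists
  exact dist_nonneg.trans hi

lemma mem_asymptoticCenter_of_asymptoticRadius_le (hu : u ∈ asymptoticCenter l x)
    (hvu : asymptoticRadius l x v ≤ asymptoticRadius l x u) : v ∈ asymptoticCenter l x := by
  have bddBelow_range : BddBelow (Set.range (asymptoticRadius l x)) :=
    ⟨0, Set.forall_mem_range.2 fun _ ↦ asymptoticRadius_nonneg⟩
  exact le_antisymm (hvu.trans hu.le) (ciInf_le bddBelow_range v)

lemma limsup_dist_sq (hu : IsBoundedUnder (· ≤ ·) l fun i ↦ dist (x i) u) :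
    limsup (fun i ↦ dist (x i) u ^ 2) l = asymptoticRadius l x u ^ 2 :=
  limsup_pow_of_nonneg (.of_forall fun _ ↦ dist_nonneg) hu 2

end AsymptoticCenter

/-- A self-map `T` is metrically nonspreading if `2 d(Tx, Ty)² ≤ d(Tx, y)² + d(Ty, x)²` for all
points `x` and `y`. -/
def IsMetricallyNonspreading {X : Type*} [Dist X] (T : X → X) : Prop :=
  ∀ x y : X, 2 * dist (T x) (T y) ^ 2 ≤ dist (T x) y ^ 2 + dist (T y) x ^ 2

namespace IsMetricallyNonspreading

variable {ι X : Type*} [PseudoMetricSpace X] {l : Filter ι} {T : X → X} {x : ι → X}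

lemma dist_map_map_le (hT : IsMetricallyNonspreading T) (y z : X) :
    dist (T y) (T z) ≤ dist y (T z) + 3 * dist (T z) z := by
  have nonspreading := hT y z
  have triangle := pow_le_pow_left₀ dist_nonneg (dist_triangle (T y) (T z) z) 2
  rw [dist_comm (T z) y] at nonspreading
  -- With `a = d(Ty, Tz)`, `c = d(Tz, z)` and `m = d(y, Tz)`, complete the square in `a`:
  -- `2a² ≤ (a + c)² + m²` is `(a - c)² ≤ m² + 2c²`.
  have sq_le : (dist (T y) (T z) - dist (T z) z) ^ 2 ≤
      (dist y (T z) + 2 * dist (T z) z) ^ 2 := by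
    nlinarith [mul_nonneg (dist_nonneg (x := y) (y := T z)) (dist_nonneg (x := T z) (y := z))]
  linarith [le_of_sq_le_sq sq_le (by positivity)]

lemma isBoundedUnder_le_dist_map (hT : IsMetricallyNonspreading T) {p : X}
    (hx : IsBoundedUnder (· ≤ ·) l fun i ↦ dist (x i) (T p)) :
    IsBoundedUnder (· ≤ ·) l fun i ↦ dist (T (x i)) (T p) :=
  (isBoundedUnder_le_add hx (isBoundedUnder_const (a := 3 * dist (T p) p))).mono_le
    (.of_forall fun i ↦ hT.dist_map_map_le (x i) p)

lemma two_mul_asymptoticRadius_sq_le [NeBot l] (hT : IsMetricallyNonspreading T) {p : X}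
    (hx : IsBoundedUnder (· ≤ ·) l fun i ↦ dist (x i) (T p)) :
    2 * asymptoticRadius l (T ∘ x) (T p) ^ 2 ≤
      asymptoticRadius l (T ∘ x) p ^ 2 + asymptoticRadius l x (T p) ^ 2 := by
  have sq_bddBelow {y : ι → X} {u : X} : IsBoundedUnder (· ≥ ·) l fun i ↦ dist (y i) u ^ 2 :=
    isBoundedUnder_of ⟨0, fun _ ↦ sq_nonneg _⟩
  have sq_bddAbove {y : ι → X} {u : X} (hy : IsBoundedUnder (· ≤ ·) l fun i ↦ dist (y i) u) :
      IsBoundedUnder (· ≤ ·) l fun i ↦ dist (y i) u ^ 2 :=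
    isBoundedUnder_le_pow (.of_forall fun _ ↦ dist_nonneg) hy 2
  have hTx := hT.isBoundedUnder_le_dist_map hx
  have hTx' := (isBoundedUnder_le_dist_right_congr (T p) p).1 hTx
  calc 2 * asymptoticRadius l (T ∘ x) (T p) ^ 2
      = limsup (fun i ↦ 2 * dist (T (x i)) (T p) ^ 2) l := by
        rw [← limsup_dist_sq (x := T ∘ x) hTx]
        exact (limsup_const_mul_of_nonneg zero_le_two (sq_bddAbove hTx)
          sq_bddBelow.isCoboundedUnder_le).symm
    _ ≤ limsup ((fun i ↦ dist (T (x i)) p ^ 2) + fun i ↦ dist (x i) (T p) ^ 2) l := by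
        refine limsup_le_limsup (.of_forall fun i ↦ ?_)
          (isBoundedUnder_of ⟨0, fun _ ↦ by positivity⟩ :
            IsBoundedUnder (· ≥ ·) l _).isCoboundedUnder_le
          (isBoundedUnder_le_add (sq_bddAbove hTx') (sq_bddAbove hx))
        simpa only [Pi.add_apply, dist_comm (x i)] using hT (x i) p
    _ ≤ limsup (fun i ↦ dist (T (x i)) p ^ 2) l + limsup (fun i ↦ dist (x i) (T p) ^ 2) l :=
        limsup_add_le sq_bddBelow (sq_bddAbove hTx') sq_bddBelow.isCoboundedUnder_le
          (sq_bddAbove hx)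
    _ = asymptoticRadius l (T ∘ x) p ^ 2 + asymptoticRadius l x (T p) ^ 2 :=
        congrArg₂ (· + ·) (limsup_dist_sq (x := T ∘ x) hTx') (limsup_dist_sq hx)

end IsMetricallyNonspreading

theorem stmt_5_general {ι X : Type*} [PseudoMetricSpace X] {l : Filter ι} [NeBot l] {T : X → X}
    (hT : IsMetricallyNonspreading T) {x : ι → X} {p : X} (hp : p ∈ asymptoticCenter l x)
    (h₁ : asymptoticRadius l (T ∘ x) p ≤ asymptoticRadius l x p)
    (h₂ : asymptoticRadius l x (T p) ≤ asymptoticRadius l (T ∘ x) (T p)) :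
    T p ∈ asymptoticCenter l x := by
  by_cases hx : IsBoundedUnder (· ≤ ·) l fun i ↦ dist (x i) (T p)
  · have nonspreading := hT.two_mul_asymptoticRadius_sq_le hx
    have sq_le₁ := pow_le_pow_left₀ asymptoticRadius_nonneg h₁ 2
    have sq_le₂ := pow_le_pow_left₀ asymptoticRadius_nonneg h₂ 2
    have radius_le : asymptoticRadius l x (T p) ≤ asymptoticRadius l x p :=
      le_of_sq_le_sq (by linarith) asymptoticRadius_nonneg
    exact mem_asymptoticCenter_of_asymptoticRadius_le hp radius_le
  · rw [asymptoticCenter_eq_univ_of_not_isBoundedUnder hx]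
    exact Set.mem_univ _

/-- If `T` is metrically nonspreading, the asymptotic center of `{xₙ}` is `{p}`,
`limsupₙ d(xₙ,p) = limsupₙ d(Txₙ,p)` and `limsupₙ d(xₙ,Tp) = limsupₙ d(Txₙ,Tp)`,
then `p` is a fixed point of `T`. -/
theorem stmt_5 {X : Type*} [MetricSpace X] (T : X → X)
    (hT : ∀ x y : X, 2 * dist (T x) (T y) ^ 2 ≤ dist (T x) y ^ 2 + dist (T y) x ^ 2)
    (x : ℕ → X) (p : X)
    (hAC : {u : X | limsup (fun n => dist u (x n)) atTop
              = ⨅ y : X, limsup (fun n => dist y (x n)) atTop} = {p})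
    (h₁ : limsup (fun n => dist (x n) p) atTop = limsup (fun n => dist (T (x n)) p) atTop)
    (h₂ : limsup (fun n => dist (x n) (T p)) atTop
        = limsup (fun n => dist (T (x n)) (T p)) atTop) :
    T p = p := by
  have center_eq : asymptoticCenter atTop x = {p} := by
    simpa only [asymptoticCenter, asymptoticRadius, dist_comm (x _)] using hAC
  exact center_eq.le (stmt_5_general hT (center_eq.ge rfl) h₁.ge h₂.le)
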